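/- Suppose the bimoments satisfy ∑_{i=0}^{n} a_i · I (r+i) s + ∑_{j=0}^{m} I r (s+j) · b_j = α_r · β_s for all r, s ∈ ℕ, where a_0,…,a_n and b_0,…,b_m lie in the center of R and α, β : ℕ → R. For finitely supported coefficient sequences c, d : ℕ → R (representing a left polynomial p(x) = ∑_i c_i x^i and a right polynomial q(y) = ∑_j y^j d_j), set π = ∑_i c_i α_i and η = ∑_j β_j d_j. Then ⟨p·f, q⟩ + ⟨p, g·q⟩ = π · η, where f(x) = ∑_{i=0}^n a_i x^i and g(y) = ∑_{j=0}^m y^j b_j; explicitly, ∑_{s,j} (∑_t c_t a_{s−t}) · I s j · d_j + ∑_{i,s} c_i · I i s · (∑_t b_t d_{s−t}) = π · η. -/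

import Mathlib

/-- The pairing of a left polynomial `p(x) = ∑ aᵢ xⁱ` with a right polynomial
`q(y) = ∑ yʲ bⱼ` relative to bimoments `I`: `⟨p, q⟩ = ∑_{i,j} aᵢ · I i j · bⱼ`.
(Left and right polynomials are both recorded by their coefficient sequences,
as elements of `Polynomial R`.) -/
noncomputable def bimomentPairing {R : Type*} [DivisionRing R] (I : ℕ → ℕ → R)
    (p q : Polynomial R) : R :=
  ∑ i ∈ p.support, ∑ j ∈ q.support, p.coeff i * I i j * q.coeff j

/-!
Multiplying `p` by `f` is adjoint to letting `f` act on the first index of the bimoments, and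
multiplying `q` by `g` is adjoint to letting `g` act on the second. So `⟨p f, q⟩ + ⟨p, g q⟩` is
the pairing of `p` and `q` relative to the kernel on the left of the moment relation. That kernel
is `α r * β s`, and pairing with a kernel of rank one factors.
-/

open Polynomial

section Semiring

variable {R : Type*} [Semiring R]

/-- The pairing `∑_{r,s} c_r * K r s * d_s` of a left polynomial `∑ c_r x^r` with a right
polynomial `∑ y^s d_s` relative to a kernel `K`, with coefficients in any semiring. Over a
division ring it is `bimomentPairing`. Allowing any kernel lets it be applied to the kernels
obtained from the bimoments `I` by the action of a polynomial on one index. -/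
noncomputable def kernelPairing (K : ℕ → ℕ → R) (p q : R[X]) : R :=
  p.sum fun r c => q.sum fun s d => c * K r s * d

lemma sum_mul_index {S : Type*} [AddCommMonoid S] (p q : R[X]) (F : ℕ → R → S)
    (hF : ∀ k, F k 0 = 0) (hF_add : ∀ k a b, F k (a + b) = F k a + F k b) :
    (p * q).sum F = p.sum fun i a => q.sum fun j b => F (i + j) (a * b) := by
  let total : R[X] →+ S :=
    { toFun u := u.sum F
      map_zero' := sum_zero_index F
      map_add' u v := sum_add_index u v F hF hF_add }
  have total_monomial (k : ℕ) (c : R) : total (monomial k c) = F k c :=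
    sum_monomial_index c F (hF k)
  change total (p * q) = _
  simp only [mul_eq_sum_sum, sum_def, map_sum, total_monomial]

lemma kernelPairing_mul_left (K : ℕ → ℕ → R) (p f q : R[X]) :
    kernelPairing K (p * f) q
      = kernelPairing (fun r s => f.sum fun i a => a * K (r + i) s) p q := by
  have expand : kernelPairing K (p * f) q
      = p.sum fun r c => f.sum fun i a => q.sum fun s d => c * a * K (r + i) s * d :=
    sum_mul_index p f _ (fun k => by simp [sum_def])
      fun k a b => by simp only [sum_def, add_mul, Finset.sum_add_distrib]
  rw [expand]
  simp only [kernelPairing, sum_def, Finset.mul_sum, Finset.sum_mul, mul_assoc]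
  exact Finset.sum_congr rfl fun r _ => Finset.sum_comm

lemma kernelPairing_mul_right (K : ℕ → ℕ → R) (p g q : R[X]) :
    kernelPairing K p (g * q)
      = kernelPairing (fun r s => g.sum fun j b => K r (s + j) * b) p q := by
  have expand : kernelPairing K p (g * q)
      = p.sum fun r c => g.sum fun j b => q.sum fun s d => c * K r (j + s) * (b * d) :=
    congrArg p.sum <| funext₂ fun r c =>
      sum_mul_index g q _ (fun _ => mul_zero _) fun _ => mul_add _
  rw [expand]
  simp only [kernelPairing, sum_def, Finset.mul_sum, Finset.sum_mul, mul_assoc]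
  refine Finset.sum_congr rfl fun r _ => ?_
  rw [Finset.sum_comm]
  simp only [add_comm]

lemma kernelPairing_add_kernel (K L : ℕ → ℕ → R) (p q : R[X]) :
    kernelPairing (fun r s => K r s + L r s) p q = kernelPairing K p q + kernelPairing L p q := by
  simp only [kernelPairing, sum_def, mul_add, add_mul, Finset.sum_add_distrib]

lemma kernelPairing_rank_one (α β : ℕ → R) (p q : R[X]) :
    kernelPairing (fun r s => α r * β s) p q
      = (p.sum fun r c => c * α r) * q.sum fun s d => β s * d := by
  simp only [kernelPairing, sum_def, Finset.sum_mul_sum, mul_assoc]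

theorem pairing_cauchy_like_kernel_general (I : ℕ → ℕ → R) (f g : R[X]) (α β : ℕ → R)
    (hmom : ∀ r s : ℕ,
      (f.sum fun i a => a * I (r + i) s) + (g.sum fun j b => I r (s + j) * b) = α r * β s)
    (p q : R[X]) :
    kernelPairing I (p * f) q + kernelPairing I p (g * q)
      = (p.sum fun r c => c * α r) * q.sum fun s d => β s * d := by
  rw [kernelPairing_mul_left, kernelPairing_mul_right, ← kernelPairing_add_kernel]
  simp only [hmom, kernelPairing_rank_one]

lemma sum_eq_sum_range_of_coeff_eq_zero {S : Type*} [AddCommMonoid S] {f : R[X]} {n : ℕ}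
    (hf : ∀ i, n < i → f.coeff i = 0) {F : ℕ → R → S} (hF : ∀ i, F i 0 = 0) :
    f.sum F = ∑ i ∈ Finset.range (n + 1), F i (f.coeff i) :=
  f.sum_over_range' hF (n + 1) (Nat.lt_succ_of_le (natDegree_le_iff_coeff_eq_zero.2 hf))

end Semiring

lemma bimomentPairing_eq_kernelPairing {R : Type*} [DivisionRing R] (I : ℕ → ℕ → R) (p q : R[X]) :
    bimomentPairing I p q = kernelPairing I p q :=
  rfl

/-- if the bimoments satisfy
`∑_{i=0}^n aᵢ · I (r+i) s + ∑_{j=0}^m I r (s+j) · bⱼ = α_r · β_s` for central `aᵢ, bⱼ`,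
then for any left polynomial `p` and right polynomial `q`,
`⟨p·f, q⟩ + ⟨p, g·q⟩ = π · η`, where `f(x) = ∑_{i=0}^n aᵢ xⁱ`, `g(y) = ∑_{j=0}^m yʲ bⱼ`,
`π = ∑ᵢ cᵢ αᵢ` and `η = ∑ⱼ βⱼ dⱼ` (`c`, `d` the coefficient sequences of `p`, `q`). -/
theorem pairing_cauchy_like_kernel {R : Type*} [DivisionRing R] (I : ℕ → ℕ → R)
    (n m : ℕ) (f g : Polynomial R)
    (hfC : ∀ i, f.coeff i ∈ Set.center R) (hfn : ∀ i, n < i → f.coeff i = 0)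
    (hgC : ∀ j, g.coeff j ∈ Set.center R) (hgm : ∀ j, m < j → g.coeff j = 0)
    (α β : ℕ → R)
    (hmom : ∀ r s : ℕ,
      (∑ i ∈ Finset.range (n + 1), f.coeff i * I (r + i) s)
        + (∑ j ∈ Finset.range (m + 1), I r (s + j) * g.coeff j) = α r * β s)
    (p q : Polynomial R) :
    bimomentPairing I (p * f) q + bimomentPairing I p (g * q)
      = (∑ i ∈ p.support, p.coeff i * α i) * (∑ j ∈ q.support, β j * q.coeff j) := by
  simp only [bimomentPairing_eq_kernelPairing]
  refine pairing_cauchy_like_kernel_general I f g α β (fun r s => ?_) p q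
  rw [sum_eq_sum_range_of_coeff_eq_zero hfn (by simp),
    sum_eq_sum_range_of_coeff_eq_zero hgm (by simp), hmom]
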